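/- arXiv:2011.05314 — 2 statements merged into one kernel-verified Lean document; each statement's English description precedes it below -/
import Mathlib

section
/- Standard form of the KL-DRO dual: for every divergence tolerance ρ ≥ 0, sup_{π ∈ P(ρ)} Σ_ω π_ω Q_ω = inf_{ζ > 0} [ ρζ + ζ · log( Σ_ω π°_ω · exp(Q_ω/ζ) ) ]. -/
/-!
Exponentially tilting the reference weights `w` along `Q` gives the Gibbs distributions `g_t`,
and for every distribution `p` and every `t`,
`KL(p ‖ w) = KL(p ‖ g_t) + t ⟨p, Q⟩ - Λ(t)`, where `Λ(t) = log ∑ w exp(tQ)`.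
Since `KL(p ‖ g_t) ≥ 0`, this is weak duality with `t = 1/ζ`, and the choice `p = g_t` leaves the
duality gap `(ρ - KL(g_t ‖ w)) / t`. It vanishes if `KL(g_t ‖ w) = ρ` for some `t > 0`. Otherwise,
by continuity of `t ↦ KL(g_t ‖ w)`, either all `g_t` are feasible and the gap vanishes as `t → ∞`,
or `ρ` is the least possible divergence, attained by `g_0`, and strong duality is approached
as `t → 0`.
-/

section Order

variable {α : Type*} [ConditionallyCompleteLinearOrder α] [AddCommGroup α] [IsOrderedAddMonoid α]
  [DenselyOrdered α]

theorem csSup_eq_csInf_of_forall_pos_exists_le_add {s t : Set α}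
    (hle : ∀ a ∈ s, ∀ b ∈ t, a ≤ b) (hgap : ∀ ε > 0, ∃ a ∈ s, ∃ b ∈ t, b ≤ a + ε) :
    sSup s = sInf t := by
  nontriviality α
  obtain ⟨ε₀, hε₀⟩ := exists_gt (0 : α)
  obtain ⟨a₀, ha₀, b₀, hb₀, -⟩ := hgap ε₀ hε₀
  refine le_antisymm
    (csSup_le ⟨a₀, ha₀⟩ fun a ha => le_csInf ⟨b₀, hb₀⟩ (hle a ha))
    (le_of_forall_pos_le_add fun ε hε => ?_)
  obtain ⟨a, ha, b, hb, hba⟩ := hgap ε hε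
  calc
    sInf t ≤ b := csInf_le ⟨a₀, hle a₀ ha₀⟩ hb
    _ ≤ a + ε := hba
    _ ≤ sSup s + ε := by gcongr; exact le_csSup ⟨b₀, fun a ha => hle a ha b₀ hb₀⟩ ha

end Order

section KLDuality

open scoped Topology

variable {ι : Type*} [Fintype ι] {p q w : ι → ℝ}

/-- The Kullback–Leibler divergence `KL(p ‖ q)` of weights on a finite type, not necessarily
normalized; it is meaningful for `p ≥ 0` and `q > 0`. -/
noncomputable def relEntropy (p q : ι → ℝ) : ℝ :=
  ∑ i, p i * Real.log (p i / q i)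

theorem relEntropy_self (p : ι → ℝ) : relEntropy p p = 0 := by
  refine Finset.sum_eq_zero fun i _ => ?_
  obtain hi | hi := eq_or_ne (p i) 0 <;> simp [hi]

theorem sum_sub_sum_le_relEntropy (hp : ∀ i, 0 ≤ p i) (hq : ∀ i, 0 < q i) :
    ∑ i, p i - ∑ i, q i ≤ relEntropy p q := by
  rw [← Finset.sum_sub_distrib]
  refine Finset.sum_le_sum fun i _ => ?_
  have hklFun : 0 ≤ q i * InformationTheory.klFun (p i / q i) :=
    mul_nonneg (hq i).le (InformationTheory.klFun_nonneg (div_nonneg (hp i) (hq i).le))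
  have hexpand : q i * InformationTheory.klFun (p i / q i) =
      p i * Real.log (p i / q i) + q i - p i := by
    have := (hq i).ne'
    rw [InformationTheory.klFun]
    field_simp
  linarith

/-- The logarithm of the partition function `∑ w exp(tQ)`, i.e. the cumulant generating function
of `Q` under the weights `w`, at inverse temperature `t`. -/
noncomputable def logPartition (w Q : ι → ℝ) (t : ℝ) : ℝ :=
  Real.log (∑ i, w i * Real.exp (t * Q i))

/-- The Gibbs distribution at inverse temperature `t`: the weights `w` tilted by `exp(tQ)`. It is
normalized inside the exponential, so that its logarithm relative to `w` is affine in `Q`. -/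
noncomputable def gibbs (w Q : ι → ℝ) (t : ℝ) (i : ι) : ℝ :=
  w i * Real.exp (t * Q i - logPartition w Q t)

/-- The objective of the dual problem at temperature `ζ`, the multiplier of the constraint
`KL(p ‖ w) ≤ ρ`. -/
noncomputable def dualObjective (w Q : ι → ℝ) (ρ ζ : ℝ) : ℝ :=
  ρ * ζ + ζ * Real.log (∑ i, w i * Real.exp (Q i / ζ))

theorem dualObjective_inv (w Q : ι → ℝ) (ρ t : ℝ) :
    dualObjective w Q ρ t⁻¹ = (ρ + logPartition w Q t) / t := by
  simp only [dualObjective, logPartition, div_inv_eq_mul, mul_comm t]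
  ring

theorem logPartition_zero (w Q : ι → ℝ) : logPartition w Q 0 = Real.log (∑ i, w i) := by
  simp [logPartition]

theorem gibbs_pos (hw : ∀ i, 0 < w i) (Q : ι → ℝ) (t : ℝ) (i : ι) : 0 < gibbs w Q t i :=
  mul_pos (hw i) (Real.exp_pos _)

theorem relEntropy_eq_relEntropy_gibbs_add (hw : ∀ i, 0 < w i) (hp : ∑ i, p i = 1)
    (Q : ι → ℝ) (t : ℝ) :
    relEntropy p w =
      relEntropy p (gibbs w Q t) + (t * ∑ i, p i * Q i - logPartition w Q t) := by
  have hterm (i : ι) : p i * Real.log (p i / w i) =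
      p i * Real.log (p i / gibbs w Q t i) + (t * (p i * Q i) - p i * logPartition w Q t) := by
    obtain hi | hi := eq_or_ne (p i) 0
    · simp [hi]
    · rw [gibbs, ← div_div, Real.log_div (div_ne_zero hi (hw i).ne') (Real.exp_ne_zero _),
        Real.log_exp]
      ring
  simp only [relEntropy, hterm, Finset.sum_add_distrib, Finset.sum_sub_distrib, ← Finset.mul_sum,
    ← Finset.sum_mul, hp, one_mul]

variable [Nonempty ι]

theorem sum_mul_exp_pos (hw : ∀ i, 0 < w i) (Q : ι → ℝ) (t : ℝ) :
    0 < ∑ i, w i * Real.exp (t * Q i) :=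
  Finset.sum_pos (fun i _ => mul_pos (hw i) (Real.exp_pos _)) Finset.univ_nonempty

theorem sum_gibbs (hw : ∀ i, 0 < w i) (Q : ι → ℝ) (t : ℝ) : ∑ i, gibbs w Q t i = 1 := by
  have hZ := sum_mul_exp_pos hw Q t
  simp only [gibbs, logPartition, Real.exp_sub, Real.exp_log hZ, ← mul_div_assoc,
    ← Finset.sum_div, div_self hZ.ne']

theorem gibbs_mem_stdSimplex (hw : ∀ i, 0 < w i) (Q : ι → ℝ) (t : ℝ) :
    gibbs w Q t ∈ stdSimplex ℝ ι :=
  ⟨fun i => (gibbs_pos hw Q t i).le, sum_gibbs hw Q t⟩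

theorem relEntropy_gibbs (hw : ∀ i, 0 < w i) (Q : ι → ℝ) (t : ℝ) :
    relEntropy (gibbs w Q t) w = t * ∑ i, gibbs w Q t i * Q i - logPartition w Q t := by
  rw [relEntropy_eq_relEntropy_gibbs_add hw (sum_gibbs hw Q t) Q t, relEntropy_self, zero_add]

theorem mul_sum_sub_logPartition_le_relEntropy (hw : ∀ i, 0 < w i) (hp : p ∈ stdSimplex ℝ ι)
    (Q : ι → ℝ) (t : ℝ) :
    t * ∑ i, p i * Q i - logPartition w Q t ≤ relEntropy p w := by
  have hnonneg := sum_sub_sum_le_relEntropy hp.1 (gibbs_pos hw Q t)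
  rw [hp.2, sum_gibbs hw Q t, sub_self] at hnonneg
  rw [relEntropy_eq_relEntropy_gibbs_add hw hp.2 Q t]
  exact le_add_of_nonneg_left hnonneg

theorem neg_log_sum_le_relEntropy (hw : ∀ i, 0 < w i) (hp : p ∈ stdSimplex ℝ ι) :
    -Real.log (∑ i, w i) ≤ relEntropy p w := by
  simpa [logPartition_zero] using mul_sum_sub_logPartition_le_relEntropy hw hp 0 0

theorem sum_mul_le_dualObjective (hw : ∀ i, 0 < w i) (hp : p ∈ stdSimplex ℝ ι) (Q : ι → ℝ)
    {ρ ζ : ℝ} (hρ : relEntropy p w ≤ ρ) (hζ : 0 < ζ) :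
    ∑ i, p i * Q i ≤ dualObjective w Q ρ ζ := by
  rw [← inv_inv ζ, dualObjective_inv, le_div_iff₀' (inv_pos.mpr hζ)]
  linarith [mul_sum_sub_logPartition_le_relEntropy hw hp Q ζ⁻¹]

theorem dualObjective_inv_eq_sum_gibbs_add (hw : ∀ i, 0 < w i) (Q : ι → ℝ) (ρ : ℝ) {t : ℝ}
    (ht : t ≠ 0) :
    dualObjective w Q ρ t⁻¹ =
      ∑ i, gibbs w Q t i * Q i + (ρ - relEntropy (gibbs w Q t) w) / t := by
  rw [dualObjective_inv, relEntropy_gibbs hw]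
  field_simp
  ring

theorem continuous_logPartition (hw : ∀ i, 0 < w i) (Q : ι → ℝ) :
    Continuous (logPartition w Q) :=
  Continuous.log (by fun_prop) fun t => (sum_mul_exp_pos hw Q t).ne'

theorem continuous_sum_gibbs_mul (hw : ∀ i, 0 < w i) (Q : ι → ℝ) :
    Continuous fun t => ∑ i, gibbs w Q t i * Q i := by
  have := continuous_logPartition hw Q
  unfold gibbs
  fun_prop

theorem continuous_relEntropy_gibbs (hw : ∀ i, 0 < w i) (Q : ι → ℝ) :
    Continuous fun t => relEntropy (gibbs w Q t) w := by
  simp only [relEntropy_gibbs hw]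
  exact (continuous_id.mul (continuous_sum_gibbs_mul hw Q)).sub (continuous_logPartition hw Q)

theorem relEntropy_gibbs_zero (hw : ∀ i, 0 < w i) (Q : ι → ℝ) :
    relEntropy (gibbs w Q 0) w = -Real.log (∑ i, w i) := by
  rw [relEntropy_gibbs hw, zero_mul, zero_sub, logPartition_zero]

theorem exists_dualObjective_neg_log_sum_le (hw : ∀ i, 0 < w i) (Q : ι → ℝ) {ε : ℝ}
    (hε : 0 < ε) :
    ∃ ζ > 0, dualObjective w Q (-Real.log (∑ i, w i)) ζ ≤ ∑ i, gibbs w Q 0 i * Q i + ε := by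
  have hnear : ∀ᶠ t in 𝓝[>] 0, ∑ i, gibbs w Q t i * Q i < ∑ i, gibbs w Q 0 i * Q i + ε :=
    ((continuous_sum_gibbs_mul hw Q).tendsto 0).mono_left nhdsWithin_le_nhds
      |>.eventually_lt_const (lt_add_of_pos_right _ hε)
  obtain ⟨t, ht, htpos : 0 < t⟩ := (hnear.and self_mem_nhdsWithin).exists
  refine ⟨t⁻¹, inv_pos.mpr htpos, ?_⟩
  have hgap : (-Real.log (∑ i, w i) - relEntropy (gibbs w Q t) w) / t ≤ 0 :=
    div_nonpos_of_nonpos_of_nonneg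
      (sub_nonpos.mpr (neg_log_sum_le_relEntropy hw (gibbs_mem_stdSimplex hw Q t))) htpos.le
  rw [dualObjective_inv_eq_sum_gibbs_add hw Q _ htpos.ne']
  linarith

theorem exists_dualObjective_inv_le_sum_gibbs_add (hw : ∀ i, 0 < w i) (Q : ι → ℝ) {ρ ε : ℝ}
    (hρ : -Real.log (∑ i, w i) < ρ) (hε : 0 < ε) :
    ∃ t > 0, relEntropy (gibbs w Q t) w ≤ ρ ∧
      dualObjective w Q ρ t⁻¹ ≤ ∑ i, gibbs w Q t i * Q i + ε := by
  suffices ∃ t > 0, relEntropy (gibbs w Q t) w ≤ ρ ∧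
      (ρ - relEntropy (gibbs w Q t) w) / t ≤ ε by
    obtain ⟨t, ht, hfeasible, hgap⟩ := this
    refine ⟨t, ht, hfeasible, ?_⟩
    rw [dualObjective_inv_eq_sum_gibbs_add hw Q ρ ht.ne']
    gcongr
  by_cases hexceeds : ∃ s > 0, ρ < relEntropy (gibbs w Q s) w
  · obtain ⟨s, hs, hρs⟩ := hexceeds
    obtain ⟨t, ht, htρ⟩ :=
      intermediate_value_Ioo hs.le (continuous_relEntropy_gibbs hw Q).continuousOn
        ⟨(relEntropy_gibbs_zero hw Q).trans_lt hρ, hρs⟩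
    exact ⟨t, ht.1, htρ.le, by simpa [htρ] using hε.le⟩
  · push Not at hexceeds
    have hslack : 0 < ρ + Real.log (∑ i, w i) := neg_lt_iff_pos_add.mp hρ
    have ht : 0 < (ρ + Real.log (∑ i, w i)) / ε := div_pos hslack hε
    refine ⟨_, ht, hexceeds _ ht, ?_⟩
    rw [div_le_iff₀ ht, mul_div_cancel₀ _ hε.ne']
    linarith [neg_log_sum_le_relEntropy hw
      (gibbs_mem_stdSimplex hw Q ((ρ + Real.log (∑ i, w i)) / ε))]

theorem exists_dualObjective_le_sum_mul_add (hw : ∀ i, 0 < w i) (Q : ι → ℝ) {ρ ε : ℝ}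
    (hρ : -Real.log (∑ i, w i) ≤ ρ) (hε : 0 < ε) :
    ∃ p ∈ stdSimplex ℝ ι, relEntropy p w ≤ ρ ∧
      ∃ ζ > 0, dualObjective w Q ρ ζ ≤ ∑ i, p i * Q i + ε := by
  obtain rfl | hρ := hρ.eq_or_lt
  · exact ⟨gibbs w Q 0, gibbs_mem_stdSimplex hw Q 0, (relEntropy_gibbs_zero hw Q).le,
      exists_dualObjective_neg_log_sum_le hw Q hε⟩
  · obtain ⟨t, ht, hfeasible, hgap⟩ := exists_dualObjective_inv_le_sum_gibbs_add hw Q hρ hε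
    exact ⟨gibbs w Q t, gibbs_mem_stdSimplex hw Q t, hfeasible, t⁻¹, inv_pos.mpr ht, hgap⟩

end KLDuality

/-- `-log (∑ i, w i)` is the least divergence of a distribution from `w`, so `hρ` says that the
ambiguity set is nonempty. -/
theorem kl_dro_dual_standard_form_general {ι : Type*} [Fintype ι] [Nonempty ι] (w : ι → ℝ)
    (hw : ∀ i, 0 < w i) (Q : ι → ℝ) (ρ : ℝ) (hρ : -Real.log (∑ i, w i) ≤ ρ) :
    sSup {v : ℝ | ∃ p : ι → ℝ, (∀ i, 0 ≤ p i) ∧ (∑ i, p i = 1) ∧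
        (∑ i, p i * Real.log (p i / w i)) ≤ ρ ∧ v = ∑ i, p i * Q i}
      = sInf {v : ℝ | ∃ ζ : ℝ, 0 < ζ ∧
        v = ρ * ζ + ζ * Real.log (∑ i, w i * Real.exp (Q i / ζ))} := by
  refine csSup_eq_csInf_of_forall_pos_exists_le_add ?weakDuality ?strongDuality
  case weakDuality =>
    rintro _ ⟨p, hp, hp_sum, hpρ, rfl⟩ _ ⟨ζ, hζ, rfl⟩
    exact sum_mul_le_dualObjective hw ⟨hp, hp_sum⟩ Q hpρ hζ
  case strongDuality =>
    intro ε hε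
    obtain ⟨p, ⟨hp, hp_sum⟩, hpρ, ζ, hζ, hgap⟩ := exists_dualObjective_le_sum_mul_add hw Q hρ hε
    exact ⟨_, ⟨p, hp, hp_sum, hpρ, rfl⟩, _, ⟨ζ, hζ, rfl⟩, hgap⟩

/-- Standard form of the KL-DRO dual:
sup over the ambiguity set equals inf over ζ > 0 of ρζ + ζ·log(Σ_ω π°_ω·exp(Q_ω/ζ)). -/
theorem kl_dro_dual_standard_form
    (S : ℕ) (hS : 1 ≤ S) (π₀ : Fin S → ℝ)
    (hπ₀pos : ∀ ω, 0 < π₀ ω) (hπ₀sum : ∑ ω, π₀ ω = 1)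
    (Q : Fin S → ℝ) (ρ : ℝ) (hρ : 0 ≤ ρ) :
    sSup {v : ℝ | ∃ π : Fin S → ℝ, (∀ ω, 0 ≤ π ω) ∧ (∑ ω, π ω = 1) ∧
        (∑ ω, π ω * Real.log (π ω / π₀ ω)) ≤ ρ ∧ v = ∑ ω, π ω * Q ω}
      = sInf {v : ℝ | ∃ ζ : ℝ, 0 < ζ ∧
        v = ρ * ζ + ζ * Real.log (∑ ω, π₀ ω * Real.exp (Q ω / ζ))} := by
  have : NeZero S := NeZero.of_pos hS
  exact kl_dro_dual_standard_form_general π₀ hπ₀pos Q ρ (by simpa [hπ₀sum] using hρ)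
end

section
/- Convexity of the reduced dual objective in the multiplier: the function ζ ↦ ζ · log( Σ_ω π°_ω · exp(Q_ω/ζ) ) is convex on (0, ∞). -/
/-!
The logarithm of `∫ exp f` is convex in `f`: subtracting from `f` and `g` the logarithms of their
exponential integrals normalises these integrals to one, and then the pointwise convexity of `exp`
integrates to the claim. The reduced dual objective is the perspective `ζ • F (ζ⁻¹ • Q)` of this
functional `F`, and the perspective of a convex function is jointly convex in `(ζ, Q)`.
-/

open MeasureTheory Real

section Perspective

variable {𝕜 E β : Type*} [Field 𝕜] [AddCommMonoid E] [Module 𝕜 E] [AddCommMonoid β] [Module 𝕜 β]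

/-- The perspective of a function `f`, which makes `f` positively homogeneous of degree one by means
of an additional scale variable, the first component. It is meaningful at positive scales only. -/
def perspective (f : E → β) (p : 𝕜 × E) : β :=
  p.1 • f (p.1⁻¹ • p.2)

lemma inv_smul_convexCombo {x y : 𝕜} (hx : x ≠ 0) (hy : y ≠ 0) (a b z : 𝕜) (u v : E) :
    z⁻¹ • (a • u + b • v) = (a * x / z) • x⁻¹ • u + (b * y / z) • y⁻¹ • v := by
  simp only [smul_add, smul_smul]
  congr 2 <;> field_simp

variable [LinearOrder 𝕜] [IsStrictOrderedRing 𝕜]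

lemma convex_perspective_domain {s : Set E} (hs : Convex 𝕜 s) :
    Convex 𝕜 {p : 𝕜 × E | 0 < p.1 ∧ p.1⁻¹ • p.2 ∈ s} := by
  rintro ⟨x, u⟩ ⟨hx, hu⟩ ⟨y, v⟩ ⟨hy, hv⟩ a b ha hb hab
  dsimp only at hx hu hy hv
  have hz : 0 < a * x + b * y := convex_Ioi (0 : 𝕜) hx hy ha hb hab
  refine ⟨hz, ?_⟩
  change (a * x + b * y)⁻¹ • (a • u + b • v) ∈ s
  rw [inv_smul_convexCombo hx.ne' hy.ne']
  exact hs hu hv (by positivity) (by positivity) (by rw [← add_div, div_self hz.ne'])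

theorem convexOn_perspective [PartialOrder β] [PosSMulMono 𝕜 β] {s : Set E} {f : E → β}
    (hf : ConvexOn 𝕜 s f) :
    ConvexOn 𝕜 {p : 𝕜 × E | 0 < p.1 ∧ p.1⁻¹ • p.2 ∈ s} (perspective f) := by
  refine ⟨convex_perspective_domain hf.1, ?_⟩
  rintro ⟨x, u⟩ ⟨hx, hu⟩ ⟨y, v⟩ ⟨hy, hv⟩ a b ha hb hab
  dsimp only at hx hu hy hv
  set z := a * x + b * y with hz_def
  have hz : 0 < z := convex_Ioi (0 : 𝕜) hx hy ha hb hab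
  have hweights : a * x / z + b * y / z = 1 := by rw [← add_div, ← hz_def, div_self hz.ne']
  calc z • f (z⁻¹ • (a • u + b • v))
      = z • f ((a * x / z) • x⁻¹ • u + (b * y / z) • y⁻¹ • v) := by
        rw [inv_smul_convexCombo hx.ne' hy.ne']
    _ ≤ z • ((a * x / z) • f (x⁻¹ • u) + (b * y / z) • f (y⁻¹ • v)) :=
        smul_le_smul_of_nonneg_left
          (hf.2 hu hv (by positivity) (by positivity) hweights) hz.le
    _ = a • x • f (x⁻¹ • u) + b • y • f (y⁻¹ • v) := by
        simp only [smul_add, smul_smul, mul_div_cancel₀ _ hz.ne']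

end Perspective

section LogIntegralExp

variable {Ω : Type*} [MeasurableSpace Ω] {μ : Measure Ω}

lemma exp_convexCombo_le {a b : ℝ} (ha : 0 ≤ a) (hb : 0 ≤ b) (hab : a + b = 1) (x y : ℝ) :
    exp (a * x + b * y) ≤ a * exp x + b * exp y :=
  convexOn_exp.2 (Set.mem_univ x) (Set.mem_univ y) ha hb hab

lemma aemeasurable_of_integrable_exp {f : Ω → ℝ} (hf : Integrable (fun ω ↦ exp (f ω)) μ) :
    AEMeasurable f μ := by
  simpa only [log_exp] using hf.aemeasurable.log

lemma convex_integrable_exp_domain :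
    Convex ℝ {f : Ω → ℝ | Integrable (fun ω ↦ exp (f ω)) μ} := by
  intro f hf g hg a b ha hb hab
  have hmeas : AEMeasurable (a • f + b • g) μ :=
    ((aemeasurable_of_integrable_exp hf).const_smul a).add
      ((aemeasurable_of_integrable_exp hg).const_smul b)
  refine ((hf.const_mul a).add (hg.const_mul b)).mono' hmeas.exp.aestronglyMeasurable
    (ae_of_all μ fun ω ↦ ?_)
  rw [norm_of_nonneg (exp_nonneg _)]
  exact exp_convexCombo_le ha hb hab (f ω) (g ω)

lemma integrable_exp_sub_const {f : Ω → ℝ} (hf : Integrable (fun ω ↦ exp (f ω)) μ) (c : ℝ) :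
    Integrable (fun ω ↦ exp (f ω - c)) μ := by
  simpa only [exp_sub] using hf.div_const (exp c)

lemma integral_exp_sub_const (f : Ω → ℝ) (c : ℝ) :
    ∫ ω, exp (f ω - c) ∂μ = (∫ ω, exp (f ω) ∂μ) / exp c := by
  simp only [exp_sub, integral_div]

variable [NeZero μ]

lemma integral_exp_sub_log_integral_exp {f : Ω → ℝ} (hf : Integrable (fun ω ↦ exp (f ω)) μ) :
    ∫ ω, exp (f ω - log (∫ ω', exp (f ω') ∂μ)) ∂μ = 1 := by
  have hpos := integral_exp_pos hf
  rw [integral_exp_sub_const, exp_log hpos, div_self hpos.ne']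

lemma log_integral_exp_le_iff {f : Ω → ℝ} (hf : Integrable (fun ω ↦ exp (f ω)) μ) {c : ℝ} :
    log (∫ ω, exp (f ω) ∂μ) ≤ c ↔ ∫ ω, exp (f ω - c) ∂μ ≤ 1 := by
  rw [integral_exp_sub_const, div_le_one (exp_pos c), log_le_iff_le_exp (integral_exp_pos hf)]

theorem convexOn_log_integral_exp :
    ConvexOn ℝ {f : Ω → ℝ | Integrable (fun ω ↦ exp (f ω)) μ}
      (fun f ↦ log (∫ ω, exp (f ω) ∂μ)) := by
  refine ⟨convex_integrable_exp_domain, fun f hf g hg a b ha hb hab ↦ ?_⟩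
  have hfg := convex_integrable_exp_domain hf hg ha hb hab
  refine (log_integral_exp_le_iff hfg).2 ?_
  set A := log (∫ ω, exp (f ω) ∂μ)
  set B := log (∫ ω, exp (g ω) ∂μ)
  have hf' := (integrable_exp_sub_const hf A).const_mul a
  have hg' := (integrable_exp_sub_const hg B).const_mul b
  calc ∫ ω, exp ((a • f + b • g) ω - (a • A + b • B)) ∂μ
      ≤ ∫ ω, (a * exp (f ω - A) + b * exp (g ω - B)) ∂μ := by
        refine integral_mono (integrable_exp_sub_const hfg _) (hf'.add hg') fun ω ↦ ?_
        have hsplit : (a • f + b • g) ω - (a • A + b • B) = a * (f ω - A) + b * (g ω - B) := by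
          simp only [Pi.add_apply, Pi.smul_apply, smul_eq_mul]
          ring
        simpa only [hsplit] using exp_convexCombo_le ha hb hab (f ω - A) (g ω - B)
    _ = a * ∫ ω, exp (f ω - A) ∂μ + b * ∫ ω, exp (g ω - B) ∂μ := by
        rw [integral_add hf' hg', integral_const_mul, integral_const_mul]
    _ = 1 := by
        rw [integral_exp_sub_log_integral_exp hf, integral_exp_sub_log_integral_exp hg, mul_one,
          mul_one, hab]

end LogIntegralExp

theorem reduced_dual_objective_convex_general {Ω : Type*} [MeasurableSpace Ω] (μ : Measure Ω)
    [NeZero μ] :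
    ConvexOn ℝ {p : ℝ × (Ω → ℝ) | 0 < p.1 ∧ Integrable (fun ω ↦ exp (p.2 ω / p.1)) μ}
      (fun p ↦ p.1 * log (∫ ω, exp (p.2 ω / p.1) ∂μ)) := by
  have hconv := convexOn_perspective (convexOn_log_integral_exp (μ := μ))
  unfold perspective at hconv
  simpa only [Set.mem_ofPred_eq, Pi.smul_apply, smul_eq_mul, inv_mul_eq_div] using hconv

/-- Convexity of the reduced dual objective in the multiplier:
ζ ↦ ζ·log(Σ_ω π°_ω·exp(Q_ω/ζ)) is convex on (0, ∞). -/
theorem reduced_dual_objective_convex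
    (S : ℕ) (hS : 1 ≤ S) (π₀ : Fin S → ℝ)
    (hπ₀pos : ∀ ω, 0 < π₀ ω) (hπ₀sum : ∑ ω, π₀ ω = 1)
    (Q : Fin S → ℝ) :
    ConvexOn ℝ (Set.Ioi (0 : ℝ))
      (fun ζ : ℝ => ζ * Real.log (∑ ω, π₀ ω * Real.exp (Q ω / ζ))) := by
  have hsum : ∑ ω, ENNReal.ofReal (π₀ ω) = 1 := by
    rw [← ENNReal.ofReal_sum_of_nonneg fun ω _ ↦ (hπ₀pos ω).le, hπ₀sum, ENNReal.ofReal_one]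
  simpa [Function.comp_def, PMF.integral_eq_sum, (hπ₀pos _).le, Set.Ioi] using
    (reduced_dual_objective_convex_general (PMF.ofFintype _ hsum).toMeasure).comp_affineMap
      ((AffineMap.id ℝ ℝ).prod (AffineMap.const ℝ ℝ Q))
end
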